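/- Let M be a compact metric space and Φ a continuous flow on M such that lim_{t→±∞} Φ(t,x) exists for every x ∈ M, the fixed-point set M_fix is finite, and the Smale order ≼ on M_fix is antisymmetric (hence a partial order). Then for every lower set L ⊆ M_fix with respect to ≼, the set A_L := ⋃_{x ∈ L} W⁻(x) is an attractor for Φ, its fixed-point set is exactly L, and its dual repellor is M ∖ W⁺(A_L) = ⋃_{x ∈ M_fix ∖ L} W⁺(x). -/

import Mathlib

open Filter

variable {M : Type*} [MetricSpace M] [CompactSpace M]

/-- The set of fixed points of a flow. -/
def fixedPoints (Φ : Flow ℝ M) : Set M := {x : M | ∀ t : ℝ, Φ t x = x}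

/-- The stable set `W⁺(A) = {x | dist(Φ(t,x), A) → 0 as t → +∞}` of a set `A`
(stated with the extended distance, so that `W⁺(∅) = ∅` as in the paper). -/
def wPlus (Φ : Flow ℝ M) (A : Set M) : Set M :=
  {x : M | Tendsto (fun t : ℝ => EMetric.infEdist (Φ t x) A) atTop (nhds 0)}

/-- The unstable set `W⁻(A) = {x | dist(Φ(t,x), A) → 0 as t → −∞}` of a set `A`
(stated with the extended distance, so that `W⁻(∅) = ∅` as in the paper). -/
def wMinus (Φ : Flow ℝ M) (A : Set M) : Set M :=
  {x : M | Tendsto (fun t : ℝ => EMetric.infEdist (Φ t x) A) atBot (nhds 0)}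

/-- Every flow line has a sink and a source: `lim_{t→±∞} Φ(t,x)` exists for all `x`. -/
def allOrbitsConverge (Φ : Flow ℝ M) : Prop :=
  ∀ x : M, (∃ y : M, Tendsto (fun t : ℝ => Φ t x) atTop (nhds y)) ∧
    (∃ y : M, Tendsto (fun t : ℝ => Φ t x) atBot (nhds y))

/-- An attractor: a compact invariant set admitting a neighborhood `U` with
`Φ(t, cl U) ⊆ int U` for all `t > 0` and `A = ⋂_{t ≥ 0} Φ(t, U)`. -/
def IsAttractor (Φ : ℝ → M → M) (A : Set M) : Prop :=
  IsCompact A ∧ (∀ t : ℝ, Φ t '' A = A) ∧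
    ∃ U : Set M, A ⊆ interior U ∧ (∀ t > (0 : ℝ), Φ t '' closure U ⊆ interior U) ∧
      A = ⋂ t ∈ Set.Ici (0 : ℝ), Φ t '' U

/-- The one-step Smale relation on fixed points: `x ≺ y` iff `W⁻(y) ∩ W⁺(x) ≠ ∅`. -/
def smaleRel (Φ : Flow ℝ M) (x y : M) : Prop :=
  x ∈ fixedPoints Φ ∧ y ∈ fixedPoints Φ ∧ (wMinus Φ {y} ∩ wPlus Φ {x}).Nonempty

/-- The Smale order: the reflexive-transitive closure of the one-step Smale relation. -/
def smaleLe (Φ : Flow ℝ M) : M → M → Prop :=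
  Relation.ReflTransGen (smaleRel Φ)

/-- A lower set of fixed points with respect to the Smale order. -/
def IsSmaleLowerSet (Φ : Flow ℝ M) (L : Set M) : Prop :=
  L ⊆ fixedPoints Φ ∧ ∀ y ∈ L, ∀ x ∈ fixedPoints Φ, smaleLe Φ x y → x ∈ L

/-!
An attractor is obtained from an *absorbing block*: an open set `U` whose fixed points are those of
`L` and which uniformly absorbs its closure. The points whose full orbit stays in `U` are then
exactly those with source in `L`. Blocks relative to a closed invariant set persist on nearby closed
invariant sets, so by compactness and Zorn's lemma, if there were no block on the whole space, there
would be a minimal closed invariant set `K` carrying none.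

By Baire, some nonempty relatively open piece of `K` consists of points whose orbits run, with a
uniform time bound, from a small neighbourhood of a fixed point `a` to one of a fixed point `b`.
After saturation under the flow, the closure of this piece contains no fixed points besides `a` and
`b`. Since `a ∈ L` implies `b ∈ L`, closedness of the set of points with source in `L`, and of that
with sink outside `L`, passes from the complement of the piece (which carries a block by minimality)
to `K`. An open neighbourhood of the former set whose closure misses the latter is a block for `K`,
a contradiction.
-/

open Set Topology

section Topological

variable {X : Type*} [TopologicalSpace X] {φ : Flow ℝ X} {K U : Set X}

theorem isOpen_setOf_forall_mem_of_isCompact {Y : Type*} [TopologicalSpace Y] {S : Set Y}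
    (hS : IsCompact S) {O : Set (X × Y)} (hO : IsOpen O) :
    IsOpen {x | ∀ y ∈ S, (x, y) ∈ O} :=
  isOpen_iff_mem_nhds.2 fun _ hx =>
    hS.eventually_forall_of_forall_eventually fun y hy => hO.mem_nhds (hx y hy)

theorem isOpen_setOf_forall_flow_mem (φ : Flow ℝ X) {S : Set ℝ} (hS : IsCompact S)
    (hU : IsOpen U) : IsOpen {x | ∀ t ∈ S, φ t x ∈ U} :=
  isOpen_setOf_forall_mem_of_isCompact hS
    (hU.preimage (φ.continuous continuous_snd continuous_fst))

theorem exists_isOpen_inter_subset_of_subset_iUnion [T2Space X] {ι : Type*} [Countable ι]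
    (hK : IsCompact K) (hne : K.Nonempty) {F : ι → Set X} (hF : ∀ i, IsClosed (F i))
    (hcover : K ⊆ ⋃ i, F i) : ∃ i V, IsOpen V ∧ (K ∩ V).Nonempty ∧ K ∩ V ⊆ F i := by
  have := hne.to_subtype
  have := isCompact_iff_compactSpace.1 hK
  obtain ⟨i, x, hx⟩ := nonempty_interior_of_iUnion_of_closed
    (fun i => (hF i).preimage (continuous_subtype_val (p := (· ∈ K))))
    (by rw [← preimage_iUnion, eq_univ_iff_forall]; exact fun x => hcover x.2)
  obtain ⟨_, hsub, ⟨V, hV, rfl⟩, hxV⟩ := mem_interior.1 hx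
  exact ⟨i, V, hV, ⟨x, x.2, hxV⟩, fun y hy => @hsub ⟨y, hy.1⟩ hy.2⟩

theorem exists_isClosed_nhds_inter_subset_singleton [T1Space X] [RegularSpace X] {S : Set X}
    (hS : S.Finite) (p : X) : ∃ C ∈ 𝓝 p, IsClosed C ∧ C ∩ S ⊆ {p} := by
  have hnhds : (S \ {p})ᶜ ∈ 𝓝 p :=
    (hS.subset sdiff_subset).isClosed.isOpen_compl.mem_nhds fun h => h.2 rfl
  obtain ⟨C, hCp, hC, hCS⟩ := exists_mem_nhds_isClosed_subset hnhds
  exact ⟨C, hCp, hC, fun q hq => by_contra fun hne => hCS hq.1 ⟨hq.2, hne⟩⟩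

theorem exists_uniform_hitting_time (φ : Flow ℝ X) (hK : IsCompact K) (hU : IsOpen U)
    (hhit : ∀ x ∈ K, ∃ t > 0, φ t x ∈ U) : ∃ T, ∀ x ∈ K, ∃ t ∈ Ioc 0 T, φ t x ∈ U := by
  refine hK.induction_on ⟨0, fun _ => False.elim⟩
    (fun s t hst ⟨T, hT⟩ => ⟨T, fun x hx => hT x (hst hx)⟩) ?_ fun x hx => ?_
  · rintro s s' ⟨T, hT⟩ ⟨T', hT'⟩
    refine ⟨max T T', ?_⟩
    rintro x (hx | hx)
    · exact (hT x hx).imp fun t ht => ⟨Ioc_subset_Ioc_right (le_max_left _ _) ht.1, ht.2⟩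
    · exact (hT' x hx).imp fun t ht => ⟨Ioc_subset_Ioc_right (le_max_right _ _) ht.1, ht.2⟩
  · obtain ⟨t, ht, hxt⟩ := hhit x hx
    exact ⟨φ t ⁻¹' U, mem_nhdsWithin_of_mem_nhds
      ((hU.preimage (φ.continuous_toFun t)).mem_nhds hxt), t, fun y hy => ⟨t, ⟨ht, le_rfl⟩, hy⟩⟩

theorem exists_confinement_time (hK : IsCompact K) (hinv : IsInvariant φ K) (hU : IsOpen U)
    (hescape : ∀ x ∈ K \ U, ∃ t < 0, φ t x ∉ closure U) :
    ∃ T, ∀ x ∈ K, (∀ t ∈ Icc 0 T, φ t x ∈ U) → ∀ t ≥ 0, φ t x ∈ U := by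
  obtain ⟨T, hT⟩ := exists_uniform_hitting_time φ.reverse (hK.diff hU)
    isClosed_closure.isOpen_compl fun x hx =>
      let ⟨t, ht, hxt⟩ := hescape x hx
      ⟨-t, neg_pos.2 ht, by simpa using hxt⟩
  refine ⟨T, fun x hx hstay t ht => by_contra fun hexit => ?_⟩
  -- Escaping backwards from the first exit time `s > T` would give an earlier exit in `[s - T, s)`.
  have hexits : IsCompact (Icc 0 t ∩ (fun s => φ s x) ⁻¹' Uᶜ) :=
    isCompact_Icc.inter_right
      (hU.isClosed_compl.preimage (φ.continuous continuous_id continuous_const))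
  obtain ⟨s, ⟨hs, hsU⟩, hleast⟩ := hexits.exists_isLeast ⟨t, ⟨ht, le_rfl⟩, hexit⟩
  have hTs : T < s := lt_of_not_ge fun hsT => hsU (hstay s ⟨hs.1, hsT⟩)
  obtain ⟨r, hr, hrU⟩ := hT (φ s x) ⟨hinv s hx, hsU⟩
  rw [φ.reverse_apply, ← φ.map_add] at hrU
  have := hleast ⟨⟨by linarith [hr.2], by linarith [hr.1, hs.2]⟩,
    fun hmem => hrU (subset_closure hmem)⟩
  linarith [hr.1]

theorem eventually_mapsTo_of_escape_of_capture (hK : IsCompact K) (hinv : IsInvariant φ K)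
    (hU : IsOpen U) (hescape : ∀ x ∈ K \ U, ∃ t < 0, φ t x ∉ closure U)
    (hcapture : ∀ x ∈ K ∩ closure U, ∀ᶠ t in atTop, φ t x ∈ U) :
    ∀ᶠ t in atTop, MapsTo (φ t) (K ∩ closure U) U := by
  obtain ⟨T, hT⟩ := exists_confinement_time hK hinv hU hescape
  obtain ⟨T', hT'⟩ := exists_uniform_hitting_time φ (hK.inter_right isClosed_closure)
    (isOpen_setOf_forall_flow_mem φ (isCompact_Icc (a := 0) (b := T)) hU) fun x hx => by
      obtain ⟨s, hs⟩ := eventually_atTop.1 (hcapture x hx)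
      refine ⟨max s 1, by positivity, fun t ht => ?_⟩
      rw [← φ.map_add]
      exact hs _ (by linarith [ht.1, le_max_left s 1])
  filter_upwards [eventually_ge_atTop T'] with t ht x hx
  obtain ⟨s, hs, hstay⟩ := hT' x hx
  have hconfined := hT _ (hinv s hx.1) hstay (t - s) (by linarith [hs.2])
  rwa [← φ.map_add, sub_add_cancel] at hconfined

theorem mapsTo_of_forall_mem_Icc {T : ℝ} (hT : 0 < T) (hinv : IsInvariant φ K)
    (hmaps : ∀ t ∈ Icc T (2 * T), MapsTo (φ t) (K ∩ closure U) U) {t : ℝ} (ht : T ≤ t) :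
    MapsTo (φ t) (K ∩ closure U) U := by
  obtain ⟨n, hn⟩ := exists_nat_ge (t / T)
  rw [div_le_iff₀ hT] at hn
  induction n generalizing t with
  | zero => norm_num at hn; linarith
  | succ n ih =>
    push_cast at hn
    rcases le_or_gt t (2 * T) with hle | hlt
    · exact hmaps t ⟨ht, hle⟩
    · intro x hx
      have hxT := hmaps T ⟨le_rfl, by linarith⟩ hx
      have := ih (t := t - T) (by linarith) (by linarith) ⟨hinv T hx.1, subset_closure hxT⟩
      rwa [← φ.map_add, sub_add_cancel] at this

theorem closed_invariant_induction [CompactSpace X] {P : Set X → Prop}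
    (hnhds : ∀ K, IsClosed K → IsInvariant φ K → P K →
      ∃ O, IsOpen O ∧ K ⊆ O ∧ ∀ K' ⊆ O, IsClosed K' → IsInvariant φ K' → P K')
    (hstep : ∀ K, IsClosed K → IsInvariant φ K →
      (∀ K' ⊂ K, IsClosed K' → IsInvariant φ K' → P K') → P K)
    (hK : IsClosed K) (hinv : IsInvariant φ K) : P K := by
  by_contra hPK
  obtain ⟨K₀, -, ⟨hK₀, hinv₀, hPK₀⟩, hmin⟩ :=
    zorn_superset_nonempty {K | IsClosed K ∧ IsInvariant φ K ∧ ¬ P K}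
      (fun c hc hchain hne => by
        have hclosed : IsClosed (⋂₀ c) := isClosed_sInter fun K hK => (hc hK).1
        have hinv : IsInvariant φ (⋂₀ c) := fun t x hx K hK => (hc hK).2.1 t (hx K hK)
        refine ⟨⋂₀ c, ⟨hclosed, hinv, fun hP => ?_⟩, fun K hK => sInter_subset_of_mem hK⟩
        obtain ⟨O, hO, hcO, hPO⟩ := hnhds _ hclosed hinv hP
        have := hne.to_subtype
        rw [sInter_eq_iInter] at hcO
        obtain ⟨⟨K, hK⟩, hKO⟩ := exists_subset_nhds_of_isCompact'
          (fun A B : c => (hchain.total A.2 B.2).elim (fun h => ⟨A, le_rfl, h⟩)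
            fun h => ⟨B, h, le_rfl⟩)
          (fun K => (hc K.2).1.isCompact) (fun K => (hc K.2).1)
          fun x hx => hO.mem_nhds (hcO hx)
        exact (hc hK).2.2 (hPO K hKO (hc hK).1 (hc hK).2.1)) K ⟨hK, hinv, hPK⟩
  exact hPK₀ (hstep K₀ hK₀ hinv₀ fun K' hK' hclosed hinv =>
    by_contra fun hP => hK'.2 (hmin ⟨hclosed, hinv, hP⟩ hK'.1))

theorem exists_isClosed_trapping [NormalSpace X] (hU : IsOpen U)
    (habsorb : ∀ᶠ t in atTop, MapsTo (φ t) (closure U) U) :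
    ∃ V ⊆ U, IsClosed V ∧ {x | ∀ t, φ t x ∈ U} ⊆ interior V ∧
      ∀ t > 0, MapsTo (φ t) V (interior V) := by
  obtain ⟨T, hT⟩ := eventually_atTop.1 ((eventually_ge_atTop 0).and habsorb)
  have hT0 : 0 ≤ T := (hT T le_rfl).1
  obtain ⟨g, hg0, hg1, hg⟩ := exists_continuous_zero_one_of_isClosed
    ((isClosed_closure (s := U)).preimage (φ.continuous_toFun (-T))) hU.isClosed_compl
    (disjoint_left.2 fun x hx hxU => hxU <| by
      simpa [← φ.map_add] using (hT T le_rfl).2 hx)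
  have hzero {x : X} {t : ℝ} (ht : φ (t - T) x ∈ closure U) : g (φ t x) = 0 :=
    hg0 (by rwa [mem_preimage, ← φ.map_add, neg_add_eq_sub])
  -- The weight `1 + t` makes `x ↦ max_t (1 + t) * g (φ t x)` strictly decrease along orbits.
  let weighted (x : X) (t : ℝ) : ℝ := (1 + t) * g (φ t x)
  have hcont : Continuous fun p : X × ℝ => weighted p.1 p.2 := by fun_prop
  let V := {x | ∀ t ∈ Icc 0 (2 * T), weighted x t ≤ 1 / 2}
  have hVU : V ⊆ U := fun x hx => by_contra fun hxU => by
    have := hx 0 ⟨le_rfl, by linarith⟩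
    norm_num [weighted, hg1 hxU] at this
  have hVinterior {x : X} (hx : ∀ t ≥ 0, weighted x t < 1 / 2) : x ∈ interior V :=
    mem_interior.2 ⟨{x | ∀ t ∈ Icc 0 (2 * T), weighted x t < 1 / 2},
      fun y hy t ht => (hy t ht).le,
      isOpen_setOf_forall_mem_of_isCompact isCompact_Icc (isOpen_lt hcont continuous_const),
      fun t ht => hx t ht.1⟩
  refine ⟨V, hVU, ?_, fun x hx => hVinterior fun t _ => ?_, fun s hs x hx =>
    hVinterior fun t ht => ?_⟩
  · simp only [V, ofPred_forall]
    exact isClosed_biInter fun t _ =>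
      isClosed_le (hcont.comp (Continuous.prodMk_left t)) continuous_const
  · simp [weighted, hzero (subset_closure (hx (t - T)))]
  · simp only [weighted, ← φ.map_add]
    rcases le_or_gt (t + s) (2 * T) with hle | hlt
    · have hweighted : (1 + (t + s)) * g (φ (t + s) x) ≤ 1 / 2 := hx _ ⟨by linarith, hle⟩
      rcases (hg (φ (t + s) x)).1.eq_or_lt with h0 | hpos
      · norm_num [← h0]
      · nlinarith
    · have hmem := (hT (t + s - T) (by linarith)).2 (subset_closure (hVU hx))
      norm_num [hzero (subset_closure hmem)]

end Topological

theorem isAttractor_setOf_forall_flow_mem {X : Type*} [MetricSpace X] [CompactSpace X]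
    {φ : Flow ℝ X} {U : Set X} (hU : IsOpen U)
    (habsorb : ∀ᶠ t in atTop, MapsTo (φ t) (closure U) U) :
    IsAttractor φ {x | ∀ t, φ t x ∈ U} := by
  obtain ⟨V, hVU, hV, hAV, htrap⟩ := exists_isClosed_trapping hU habsorb
  have hinv : IsInvariant φ {x | ∀ t, φ t x ∈ U} := fun s x hx t => by
    simpa only [φ.map_add] using hx (t + s)
  have hA : {x | ∀ t, φ t x ∈ U} = ⋂ t ∈ Ici (0 : ℝ), φ t '' V := by
    ext x
    simp only [φ.image_eq_preimage_symm, mem_iInter, mem_preimage]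
    refine ⟨fun hx t _ => interior_subset (hAV (hinv (-t) hx)), fun hx t => hVU ?_⟩
    rcases le_or_gt t 0 with ht | ht
    · simpa using hx (-t) (neg_nonneg.2 ht)
    · exact interior_subset (htrap t ht (by simpa using hx 0 self_mem_Ici))
  refine ⟨IsClosed.isCompact ?_, (φ.isInvariant_iff_image_eq _).1 hinv, V, hAV,
    fun t ht => ?_, hA⟩
  · rw [hA]
    exact isClosed_biInter fun t _ => (φ.toHomeomorph t).isClosedMap V hV
  · rw [hV.closure_eq]
    exact (htrap t ht).image_subset

section ConvergentOrbits

variable {X : Type*} [MetricSpace X] {φ : Flow ℝ X} {K L : Set X} {x : X}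

/-- The limit of the orbit of `x` as time tends to `+∞`; a junk value if there is no such limit. -/
noncomputable def sink (φ : Flow ℝ X) (x : X) : X :=
  haveI : Nonempty X := ⟨x⟩
  limUnder atTop fun t => φ t x

/-- The limit of the orbit of `x` as time tends to `-∞`, encoded as its sink under the reversed flow
so that facts about sources are facts about sinks; a junk value if there is no such limit. -/
noncomputable def source (φ : Flow ℝ X) (x : X) : X :=
  sink φ.reverse x

theorem tendsto_reverse_iff {Y : Type*} {f : X → Y} {l : Filter Y} :
    Tendsto (fun t => f (φ.reverse t x)) atTop l ↔ Tendsto (fun t => f (φ t x)) atBot l :=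
  tendsto_comp_neg_atTop_iff (f := fun t => f (φ t x))

theorem wPlus_reverse (φ : Flow ℝ X) (A : Set X) : wPlus φ.reverse A = wMinus φ A :=
  ext fun _ => tendsto_reverse_iff (f := fun x => Metric.infEDist x A)

theorem fixedPoints_reverse (φ : Flow ℝ X) : fixedPoints φ.reverse = fixedPoints φ :=
  ext fun _ => ⟨fun h t => by simpa using h (-t), fun h t => h (-t)⟩

theorem isInvariant_reverse (hinv : IsInvariant φ K) : IsInvariant φ.reverse K :=
  fun t => hinv (-t)

theorem sink_eq_of_tendsto {y : X} (h : Tendsto (fun t => φ t x) atTop (𝓝 y)) : sink φ x = y :=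
  h.limUnder_eq

theorem sink_eq_self (hx : x ∈ fixedPoints φ) : sink φ x = x :=
  sink_eq_of_tendsto (tendsto_const_nhds.congr fun t => (hx t).symm)

theorem source_eq_self (hx : x ∈ fixedPoints φ) : source φ x = x :=
  sink_eq_self (fixedPoints_reverse φ ▸ hx)

namespace allOrbitsConverge

variable (h : allOrbitsConverge φ)

include h

theorem tendsto_sink (x : X) : Tendsto (fun t => φ t x) atTop (𝓝 (sink φ x)) :=
  tendsto_nhds_limUnder (h x).1

theorem reverse : allOrbitsConverge φ.reverse := fun x =>
  ⟨(h x).2.imp fun _ => tendsto_reverse_iff (f := id).2,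
    (h x).1.imp fun _ hy => hy.comp tendsto_neg_atBot_atTop⟩

theorem tendsto_source (x : X) : Tendsto (fun t => φ t x) atBot (𝓝 (source φ x)) :=
  tendsto_reverse_iff (f := id).1 (h.reverse.tendsto_sink x)

theorem sink_mem_fixedPoints (x : X) : sink φ x ∈ fixedPoints φ := fun t =>
  tendsto_nhds_unique
    (((φ.continuous_toFun t).tendsto _).comp (h.tendsto_sink x))
    (((h.tendsto_sink x).comp (tendsto_atTop_add_const_left atTop t tendsto_id)).congr fun s =>
      φ.map_add t s x)

theorem source_mem_fixedPoints (x : X) : source φ x ∈ fixedPoints φ :=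
  fixedPoints_reverse φ ▸ h.reverse.sink_mem_fixedPoints x

theorem sink_flow (t : ℝ) (x : X) : sink φ (φ t x) = sink φ x :=
  sink_eq_of_tendsto <|
    ((h.tendsto_sink x).comp (tendsto_atTop_add_const_right atTop t tendsto_id)).congr fun s =>
      φ.map_add s t x

theorem source_flow (t : ℝ) (x : X) : source φ (φ t x) = source φ x := by
  simpa [source] using h.reverse.sink_flow (-t) x

theorem sink_mem (hK : IsClosed K) (hinv : IsInvariant φ K) (hx : x ∈ K) : sink φ x ∈ K :=
  hK.mem_of_tendsto (h.tendsto_sink x) (.of_forall fun t => hinv t hx)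

theorem source_mem (hK : IsClosed K) (hinv : IsInvariant φ K) (hx : x ∈ K) : source φ x ∈ K :=
  h.reverse.sink_mem hK (isInvariant_reverse hinv) hx

theorem mem_wPlus_iff {A : Set X} (hA : IsClosed A) : x ∈ wPlus φ A ↔ sink φ x ∈ A := by
  have hlim := (Metric.continuous_infEDist (s := A)).continuousAt.tendsto.comp (h.tendsto_sink x)
  rw [Metric.mem_iff_infEDist_zero_of_closed hA]
  exact ⟨fun hx => tendsto_nhds_unique hlim hx, fun hx => by rwa [hx] at hlim⟩

theorem mem_wMinus_iff {A : Set X} (hA : IsClosed A) : x ∈ wMinus φ A ↔ source φ x ∈ A := by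
  rw [← wPlus_reverse, h.reverse.mem_wPlus_iff hA, source]

theorem iUnion_wPlus_singleton (S : Set X) : ⋃ p ∈ S, wPlus φ {p} = sink φ ⁻¹' S := by
  ext x
  simp [h.mem_wPlus_iff isClosed_singleton]

theorem iUnion_wMinus_singleton (S : Set X) : ⋃ p ∈ S, wMinus φ {p} = source φ ⁻¹' S := by
  simp only [← wPlus_reverse]
  exact h.reverse.iUnion_wPlus_singleton S

theorem sink_mem_of_source_mem (hL : IsSmaleLowerSet φ L) (hx : source φ x ∈ L) :
    sink φ x ∈ L :=
  hL.2 _ hx _ (h.sink_mem_fixedPoints x) <| .single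
    ⟨h.sink_mem_fixedPoints x, h.source_mem_fixedPoints x, x,
      (h.mem_wMinus_iff isClosed_singleton).2 rfl, (h.mem_wPlus_iff isClosed_singleton).2 rfl⟩

end allOrbitsConverge

end ConvergentOrbits

section AbsorbingBlock

variable {X : Type*} [MetricSpace X] {φ : Flow ℝ X} {K L U : Set X} {x : X}

/-- `U` is an absorbing block for the set `L` of fixed points relative to the invariant set `K`:
among the fixed points in `K`, those in `U` are the same as those in `closure U` and as those in
`L`, and after a uniform waiting time the flow maps `K ∩ closure U` into `U`. -/
structure IsAbsorbingBlock (φ : Flow ℝ X) (L K U : Set X) : Prop where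
  isOpen : IsOpen U
  inter_subset : K ∩ L ⊆ U
  fixed_subset : K ∩ closure U ∩ fixedPoints φ ⊆ L
  absorbs : ∀ᶠ t in atTop, MapsTo (φ t) (K ∩ closure U) U

namespace IsAbsorbingBlock

theorem exists_isOpen_superset (hB : IsAbsorbingBlock φ L K U) (hfin : (fixedPoints φ).Finite)
    (hL : L ⊆ fixedPoints φ) :
    ∃ O, IsOpen O ∧ K ⊆ O ∧ ∀ K' ⊆ O, IsInvariant φ K' → IsAbsorbingBlock φ L K' U := by
  obtain ⟨T, hT⟩ := eventually_atTop.1 ((eventually_gt_atTop 0).and hB.absorbs)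
  have hT0 : 0 < T := (hT T le_rfl).1
  -- By the semigroup property, absorption needs checking only on the compact time window `[T, 2T]`.
  let O₁ := (closure U)ᶜ ∪ {x | ∀ t ∈ Icc T (2 * T), φ t x ∈ U}
  let O₂ := Lᶜ ∪ U
  let O₃ := (closure U ∩ (fixedPoints φ \ L))ᶜ
  have hO₁ : IsOpen O₁ := isClosed_closure.isOpen_compl.union
    (isOpen_setOf_forall_flow_mem φ isCompact_Icc hB.isOpen)
  have hO₂ : IsOpen O₂ := (hfin.subset hL).isClosed.isOpen_compl.union hB.isOpen
  have hO₃ : IsOpen O₃ :=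
    (isClosed_closure.inter (hfin.subset sdiff_subset).isClosed).isOpen_compl
  refine ⟨O₁ ∩ O₂ ∩ O₃, (hO₁.inter hO₂).inter hO₃, fun x hx => ⟨⟨?_, ?_⟩, ?_⟩,
    fun K' hK' hinv => ⟨hB.isOpen, ?_, ?_, ?_⟩⟩
  · exact or_iff_not_imp_left.2 fun hxU t ht => (hT t ht.1).2 ⟨hx, not_not.1 hxU⟩
  · exact or_iff_not_imp_left.2 fun hxL => hB.inter_subset ⟨hx, not_not.1 hxL⟩
  · exact fun hbad => hbad.2.2 (hB.fixed_subset ⟨⟨hx, hbad.1⟩, hbad.2.1⟩)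
  · exact fun x hx => (hK' hx.1).1.2.resolve_left (not_not.2 hx.2)
  · exact fun x hx => by_contra fun hxL => (hK' hx.1.1).2 ⟨hx.1.2, hx.2, hxL⟩
  · filter_upwards [eventually_ge_atTop T] with t ht
    exact mapsTo_of_forall_mem_Icc hT0 hinv (fun s hs x hx =>
      (hK' hx.1).1.1.resolve_left (not_not.2 hx.2) s hs) ht

variable (hB : IsAbsorbingBlock φ L K U) (h : allOrbitsConverge φ) (hK : IsClosed K)
  (hinv : IsInvariant φ K) (hx : x ∈ K)

include hB h hK hinv hx

theorem flow_mem_of_source_mem (hxL : source φ x ∈ L) (t : ℝ) : φ t x ∈ U := by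
  have hsource : source φ x ∈ U := hB.inter_subset ⟨h.source_mem hK hinv hx, hxL⟩
  obtain ⟨T, hT⟩ := eventually_atTop.1 hB.absorbs
  obtain ⟨s, hsU, hst⟩ := (((h.tendsto_source x).eventually_mem (hB.isOpen.mem_nhds hsource)).and
    (eventually_le_atBot (t - T))).exists
  have := hT (t - s) (by linarith) ⟨hinv s hx, subset_closure hsU⟩
  rwa [← φ.map_add, sub_add_cancel] at this

theorem source_mem_of_forall_flow_mem_closure (hxU : ∀ t, φ t x ∈ closure U) :
    source φ x ∈ L :=
  hB.fixed_subset ⟨⟨h.source_mem hK hinv hx,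
    isClosed_closure.mem_of_tendsto (h.tendsto_source x) (.of_forall hxU)⟩,
    h.source_mem_fixedPoints x⟩

theorem source_mem_iff : source φ x ∈ L ↔ ∀ t, φ t x ∈ U :=
  ⟨hB.flow_mem_of_source_mem h hK hinv hx, fun hxU =>
    hB.source_mem_of_forall_flow_mem_closure h hK hinv hx fun t => subset_closure (hxU t)⟩

theorem sink_mem_iff : sink φ x ∈ L ↔ ∃ t, φ t x ∈ U := by
  refine ⟨fun hxL => ?_, fun ⟨t, ht⟩ => ?_⟩
  · have hsink : sink φ x ∈ U := hB.inter_subset ⟨h.sink_mem hK hinv hx, hxL⟩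
    exact ((h.tendsto_sink x).eventually_mem (hB.isOpen.mem_nhds hsink)).exists
  · have habsorbed : ∀ᶠ s in atTop, φ s (φ t x) ∈ closure U :=
      hB.absorbs.mono fun s hs => subset_closure (hs ⟨hinv t hx, subset_closure ht⟩)
    have hsink := isClosed_closure.mem_of_tendsto (h.tendsto_sink (φ t x)) habsorbed
    rw [h.sink_flow] at hsink
    exact hB.fixed_subset ⟨⟨h.sink_mem hK hinv hx, hsink⟩, h.sink_mem_fixedPoints x⟩

omit hx

theorem isClosed_inter_source_preimage : IsClosed (K ∩ source φ ⁻¹' L) := by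
  have : K ∩ source φ ⁻¹' L = K ∩ ⋂ t, φ t ⁻¹' closure U := by
    ext x
    refine and_congr_right fun hx => ⟨fun hxL => mem_iInter.2 fun t =>
      subset_closure (hB.flow_mem_of_source_mem h hK hinv hx hxL t), fun hxU =>
      hB.source_mem_of_forall_flow_mem_closure h hK hinv hx (mem_iInter.1 hxU)⟩
  rw [this]
  exact hK.inter (isClosed_iInter fun t => isClosed_closure.preimage (φ.continuous_toFun t))

theorem isClosed_inter_sink_preimage_compl : IsClosed (K ∩ sink φ ⁻¹' Lᶜ) := by
  have : K ∩ sink φ ⁻¹' Lᶜ = K ∩ ⋂ t, φ t ⁻¹' Uᶜ := by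
    ext x
    refine and_congr_right fun hx => ?_
    simp only [mem_preimage, mem_compl_iff, hB.sink_mem_iff h hK hinv hx, not_exists, mem_iInter]
  rw [this]
  exact hK.inter (isClosed_iInter fun t => hB.isOpen.isClosed_compl.preimage (φ.continuous_toFun t))

end IsAbsorbingBlock

theorem exists_isAbsorbingBlock_of_isClosed [CompactSpace X] (h : allOrbitsConverge φ)
    (hL : IsSmaleLowerSet φ L) (hK : IsClosed K) (hinv : IsInvariant φ K)
    (hsource : IsClosed (K ∩ source φ ⁻¹' L)) (hsink : IsClosed (K ∩ sink φ ⁻¹' Lᶜ)) :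
    ∃ U, IsAbsorbingBlock φ L K U := by
  obtain ⟨U, hU, hsourceU, hUsink⟩ := normal_exists_closure_subset hsource hsink.isOpen_compl
    fun x hx hx' => hx'.2 (h.sink_mem_of_source_mem hL hx.2)
  have sink_mem {x : X} (hx : x ∈ K ∩ closure U) : sink φ x ∈ L :=
    by_contra fun hxL => hUsink hx.2 ⟨hx.1, hxL⟩
  refine ⟨U, hU, fun x hx => hsourceU ⟨hx.1, ?_⟩, fun x hx => ?_,
    eventually_mapsTo_of_escape_of_capture hK.isCompact hinv hU (fun x hx => ?_) fun x hx => ?_⟩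
  · rw [mem_preimage, source_eq_self (hL.1 hx.2)]
    exact hx.2
  · exact sink_eq_self hx.2 ▸ sink_mem hx.1
  · have hsourceL : source φ x ∉ L := fun hxL => hx.2 (hsourceU ⟨hx.1, hxL⟩)
    have hsourceU : source φ x ∉ closure U := fun hmem => hsourceL <|
      sink_eq_self (h.source_mem_fixedPoints x) ▸ sink_mem ⟨h.source_mem hK hinv hx.1, hmem⟩
    exact ((eventually_lt_atBot 0).and ((h.tendsto_source x).eventually_mem
      (isClosed_closure.isOpen_compl.mem_nhds hsourceU))).exists
  · have hsinkU : sink φ x ∈ U := hsourceU ⟨h.sink_mem hK hinv hx.1, by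
      rw [mem_preimage, source_eq_self (h.sink_mem_fixedPoints x)]
      exact sink_mem hx⟩
    exact (h.tendsto_sink x).eventually_mem (hU.mem_nhds hsinkU)

end AbsorbingBlock

section ConnectingOrbits

variable {X : Type*} [MetricSpace X] {φ : Flow ℝ X} {C C' K L : Set X} {T : ℝ} {x : X}

/-- The points whose orbit runs from `C` to `C'` at the uniform rate `T`: it stays in `C` at all
times `≤ -T` and in `C'` at all times `≥ T`. -/
def connectingSet (φ : Flow ℝ X) (C C' : Set X) (T : ℝ) : Set X :=
  {x | ∀ t ≥ T, φ (-t) x ∈ C ∧ φ t x ∈ C'}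

theorem connectingSet_reverse (φ : Flow ℝ X) (C C' : Set X) (T : ℝ) :
    connectingSet φ.reverse C C' T = connectingSet φ C' C T := by
  simp only [connectingSet, φ.reverse_apply, neg_neg, and_comm]

theorem isClosed_connectingSet (hC : IsClosed C) (hC' : IsClosed C') :
    IsClosed (connectingSet φ C C' T) := by
  simp only [connectingSet, ofPred_forall]
  exact isClosed_biInter fun t _ => (hC.preimage (φ.continuous_toFun (-t))).inter
    (hC'.preimage (φ.continuous_toFun t))

theorem exists_mem_connectingSet (h : allOrbitsConverge φ) (hC : C ∈ 𝓝 (source φ x))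
    (hC' : C' ∈ 𝓝 (sink φ x)) : ∃ n : ℕ, x ∈ connectingSet φ C C' n := by
  obtain ⟨T, hT⟩ := eventually_atTop.1 <|
    ((h.reverse.tendsto_sink x).eventually_mem hC).and ((h.tendsto_sink x).eventually_mem hC')
  obtain ⟨n, hn⟩ := exists_nat_ge T
  exact ⟨n, fun t ht => hT t (hn.trans ht)⟩

theorem sink_eq_of_mem_connectingSet (h : allOrbitsConverge φ) (hC' : IsClosed C') {b : X}
    (hb : C' ∩ fixedPoints φ ⊆ {b}) (hx : x ∈ connectingSet φ C C' T) : sink φ x = b :=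
  hb ⟨hC'.mem_of_tendsto (h.tendsto_sink x)
    ((eventually_ge_atTop T).mono fun t ht => (hx t ht).2), h.sink_mem_fixedPoints x⟩

theorem source_eq_of_mem_connectingSet (h : allOrbitsConverge φ) (hC : IsClosed C) {a : X}
    (ha : C ∩ fixedPoints φ ⊆ {a}) (hx : x ∈ connectingSet φ C C' T) : source φ x = a :=
  sink_eq_of_mem_connectingSet h.reverse hC (fixedPoints_reverse φ ▸ ha)
    ((connectingSet_reverse φ C' C T).symm ▸ hx)

theorem mem_union_of_mem_closure_of_mem_fixedPoints [CompactSpace X] (hC : IsClosed C)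
    (hC' : IsClosed C') {D : Set X} (hD : ∀ x ∈ D, ∃ t, φ t x ∈ connectingSet φ C C' T) {p : X}
    (hpD : p ∈ closure D) (hp : p ∈ fixedPoints φ) : p ∈ C ∪ C' := by
  let tube := (fun q : ℝ × X => φ q.1 q.2) '' Icc (-T) T ×ˢ connectingSet φ C C' T
  have htube : IsClosed tube :=
    ((isCompact_Icc.prod (isClosed_connectingSet hC hC').isCompact).image
      (φ.continuous continuous_fst continuous_snd)).isClosed
  have hcover : D ⊆ C ∪ C' ∪ tube := fun x hx => by
    obtain ⟨t, ht⟩ := hD x hx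
    rcases le_total T t with hTt | htT
    · exact .inl (.inl (by simpa [← φ.map_add] using (ht t hTt).1))
    rcases le_total T (-t) with hTt | htT'
    · exact .inl (.inr (by simpa [← φ.map_add] using (ht (-t) hTt).2))
    · exact .inr ⟨(-t, φ t x), ⟨⟨neg_le_neg htT, htT'⟩, ht⟩, by simp [← φ.map_add]⟩
  rcases closure_minimal hcover ((hC.union hC').union htube) hpD with hmem | ⟨⟨s, y⟩, hy, hsy⟩
  · exact hmem
  · have hyp : y = p := by
      rw [← hp (-s), ← hsy]
      simp [← φ.map_add]
    subst hyp
    exact .inr (hp T ▸ (hy.2 T le_rfl).2)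

theorem exists_isOpen_isInvariant_inter_connecting [CompactSpace X] (h : allOrbitsConverge φ)
    (hfin : (fixedPoints φ).Finite) (hK : IsClosed K) (hinv : IsInvariant φ K)
    (hne : K.Nonempty) :
    ∃ W a b, IsOpen W ∧ IsInvariant φ W ∧ (K ∩ W).Nonempty ∧
      (∀ x ∈ K ∩ W, source φ x = a ∧ sink φ x = b) ∧
      ∀ p ∈ closure (K ∩ W), p ∈ fixedPoints φ → p = a ∨ p = b := by
  choose C hCnhds hC hCfix using exists_isClosed_nhds_inter_subset_singleton hfin
  have := hfin.to_subtype
  obtain ⟨⟨a, b, n⟩, V, hV, ⟨x, hx⟩, hKV⟩ := exists_isOpen_inter_subset_of_subset_iUnion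
    (F := fun i : fixedPoints φ × fixedPoints φ × ℕ => connectingSet φ (C i.1) (C i.2.1) i.2.2)
    hK.isCompact hne (fun i => isClosed_connectingSet (hC _) (hC _)) fun x _ => by
      obtain ⟨n, hn⟩ := exists_mem_connectingSet h (hCnhds (source φ x)) (hCnhds (sink φ x))
      exact mem_iUnion.2 ⟨⟨⟨_, h.source_mem_fixedPoints x⟩, ⟨_, h.sink_mem_fixedPoints x⟩, n⟩, hn⟩
  let W := ⋃ t, φ t ⁻¹' V
  have hconnect (y) (hy : y ∈ K ∩ W) : ∃ t, φ t y ∈ connectingSet φ (C a) (C b) n := by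
    obtain ⟨t, ht⟩ := mem_iUnion.1 hy.2
    exact ⟨t, hKV ⟨hinv t hy.1, ht⟩⟩
  refine ⟨W, a, b, isOpen_iUnion fun t => hV.preimage (φ.continuous_toFun t),
    fun s y hy => ?_, ⟨x, hx.1, mem_iUnion.2 ⟨0, by simpa using hx.2⟩⟩, fun y hy => ?_,
    fun p hpD hp => ?_⟩
  · obtain ⟨t, ht⟩ := mem_iUnion.1 hy
    exact mem_iUnion.2 ⟨t - s, by simpa [← φ.map_add] using ht⟩
  · obtain ⟨t, ht⟩ := hconnect y hy
    exact ⟨h.source_flow t y ▸ source_eq_of_mem_connectingSet h (hC a) (hCfix a) ht,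
      h.sink_flow t y ▸ sink_eq_of_mem_connectingSet h (hC b) (hCfix b) ht⟩
  · exact (mem_union_of_mem_closure_of_mem_fixedPoints (hC a) (hC b) hconnect hpD hp).imp
      (fun hpa => hCfix a ⟨hpa, hp⟩) fun hpb => hCfix b ⟨hpb, hp⟩

end ConnectingOrbits

theorem isClosed_inter_preimage_of_isClosed_diff {X Y : Type*} [TopologicalSpace X] {f : X → Y}
    {K W : Set X} {S : Set Y} {c : Y} (hK : IsClosed K) (hdiff : IsClosed (K \ W ∩ f ⁻¹' S))
    (hconst : ∀ x ∈ K ∩ W, f x = c) (hclosure : c ∈ S → MapsTo f (closure (K ∩ W)) S) :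
    IsClosed (K ∩ f ⁻¹' S) := by
  by_cases hc : c ∈ S
  · have : K ∩ f ⁻¹' S = K \ W ∩ f ⁻¹' S ∪ closure (K ∩ W) := by
      ext x
      refine ⟨fun hx => ?_, ?_⟩
      · by_cases hxW : x ∈ W
        · exact .inr (subset_closure ⟨hx.1, hxW⟩)
        · exact .inl ⟨⟨hx.1, hxW⟩, hx.2⟩
      · rintro (hx | hx)
        · exact ⟨hx.1.1, hx.2⟩
        · exact ⟨closure_minimal inter_subset_left hK hx, hclosure hc hx⟩
    rw [this]
    exact hdiff.union isClosed_closure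
  · have : K ∩ f ⁻¹' S = K \ W ∩ f ⁻¹' S := by
      ext x
      refine ⟨fun hx => ⟨⟨hx.1, fun hxW => hc ?_⟩, hx.2⟩, fun hx => ⟨hx.1.1, hx.2⟩⟩
      exact hconst x ⟨hx.1, hxW⟩ ▸ hx.2
    rwa [this]

section LowerSet

variable {X : Type*} [MetricSpace X] [CompactSpace X] {φ : Flow ℝ X} {K L : Set X}

theorem exists_isAbsorbingBlock_of_forall_ssubset (h : allOrbitsConverge φ)
    (hfin : (fixedPoints φ).Finite) (hL : IsSmaleLowerSet φ L) (hK : IsClosed K)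
    (hinv : IsInvariant φ K)
    (ih : ∀ K' ⊂ K, IsClosed K' → IsInvariant φ K' → ∃ U, IsAbsorbingBlock φ L K' U) :
    ∃ U, IsAbsorbingBlock φ L K U := by
  rcases K.eq_empty_or_nonempty with rfl | hne
  · exact exists_isAbsorbingBlock_of_isClosed h hL hK hinv (by simp) (by simp)
  obtain ⟨W, a, b, hW, hWinv, ⟨x, hx⟩, hconst, hfixed⟩ :=
    exists_isOpen_isInvariant_inter_connecting h hfin hK hinv hne
  have hdiff : IsClosed (K \ W) := hK.sdiff hW
  have hdiffinv : IsInvariant φ (K \ W) := fun t y hy =>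
    ⟨hinv t hy.1, fun hyW => hy.2 (by simpa [← φ.map_add] using hWinv (-t) hyW)⟩
  obtain ⟨U, hB⟩ := ih (K \ W) ⟨sdiff_subset, fun hsub => (hsub hx.1).2 hx.2⟩ hdiff hdiffinv
  have hclosureinv : IsInvariant φ (closure (K ∩ W)) := fun t =>
    MapsTo.closure (fun y hy => ⟨hinv t hy.1, hWinv t hy.2⟩) (φ.continuous_toFun t)
  have hab : a ∈ L → b ∈ L := by
    rw [← (hconst x hx).1, ← (hconst x hx).2]
    exact h.sink_mem_of_source_mem hL
  refine exists_isAbsorbingBlock_of_isClosed h hL hK hinv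
    (isClosed_inter_preimage_of_isClosed_diff hK
      (hB.isClosed_inter_source_preimage h hdiff hdiffinv) (fun y hy => (hconst y hy).1)
      fun ha y hy => ?_)
    (isClosed_inter_preimage_of_isClosed_diff hK
      (hB.isClosed_inter_sink_preimage_compl h hdiff hdiffinv) (fun y hy => (hconst y hy).2)
      fun hb y hy => ?_)
  · rcases hfixed _ (h.source_mem isClosed_closure hclosureinv hy) (h.source_mem_fixedPoints y)
      with heq | heq
    · exact heq ▸ ha
    · exact heq ▸ hab ha
  · rcases hfixed _ (h.sink_mem isClosed_closure hclosureinv hy) (h.sink_mem_fixedPoints y)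
      with heq | heq
    · exact fun hmem => hb (hab (heq ▸ hmem))
    · exact heq ▸ hb

theorem exists_isAbsorbingBlock_univ (h : allOrbitsConverge φ) (hfin : (fixedPoints φ).Finite)
    (hL : IsSmaleLowerSet φ L) : ∃ U, IsAbsorbingBlock φ L univ U :=
  closed_invariant_induction (φ := φ) (P := fun K => ∃ U, IsAbsorbingBlock φ L K U)
    (fun _ _ _ ⟨U, hB⟩ =>
      let ⟨O, hO, hKO, hBO⟩ := hB.exists_isOpen_superset hfin hL.1
      ⟨O, hO, hKO, fun K' hK' _ hinv => ⟨U, hBO K' hK' hinv⟩⟩)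
    (fun _ => exists_isAbsorbingBlock_of_forall_ssubset h hfin hL) isClosed_univ
    fun t => mapsTo_univ (φ t) univ

theorem isAttractor_source_preimage (h : allOrbitsConverge φ) (hfin : (fixedPoints φ).Finite)
    (hL : IsSmaleLowerSet φ L) : IsAttractor φ (source φ ⁻¹' L) := by
  obtain ⟨U, hB⟩ := exists_isAbsorbingBlock_univ h hfin hL
  have hU : source φ ⁻¹' L = {x | ∀ t, φ t x ∈ U} := ext fun x =>
    hB.source_mem_iff h isClosed_univ (fun t => mapsTo_univ (φ t) univ) (mem_univ x)
  rw [hU]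
  exact isAttractor_setOf_forall_flow_mem hB.isOpen (by simpa using hB.absorbs)

end LowerSet

theorem lowerSet_attractor_general {X : Type*} [MetricSpace X] [CompactSpace X] (φ : Flow ℝ X)
    (hconv : allOrbitsConverge φ) (hfin : (fixedPoints φ).Finite) (L : Set X)
    (hL : IsSmaleLowerSet φ L) :
    IsAttractor (fun t x => φ t x) (⋃ x ∈ L, wMinus φ {x}) ∧
    (⋃ x ∈ L, wMinus φ {x}) ∩ fixedPoints φ = L ∧
    univ \ wPlus φ (⋃ x ∈ L, wMinus φ {x}) = ⋃ x ∈ fixedPoints φ \ L, wPlus φ {x} := by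
  have hA := isAttractor_source_preimage hconv hfin hL
  rw [hconv.iUnion_wMinus_singleton, hconv.iUnion_wPlus_singleton]
  refine ⟨hA, ext fun x => ?_, ext fun x => ?_⟩
  · exact ⟨fun ⟨hx, hfix⟩ => source_eq_self hfix ▸ hx, fun hx =>
      ⟨by rwa [mem_preimage, source_eq_self (hL.1 hx)], hL.1 hx⟩⟩
  · have hsink := hconv.sink_mem_fixedPoints x
    simp [hconv.mem_wPlus_iff hA.1.isClosed, source_eq_self hsink, hsink]

/-- Suppose every flow line has a sink and a source, the fixed-point
set is finite, and the Smale order is antisymmetric.  Then for every lower set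
`L ⊆ M_fix`, the set `A_L = ⋃_{x ∈ L} W⁻(x)` is an attractor, its fixed-point set is
exactly `L`, and its dual repellor is `M ∖ W⁺(A_L) = ⋃_{x ∈ M_fix ∖ L} W⁺(x)`. -/
theorem lowerSet_attractor
    {M : Type*} [MetricSpace M] [CompactSpace M] (Φ : Flow ℝ M)
    (hconv : allOrbitsConverge Φ)
    (hfin : (fixedPoints Φ).Finite)
    (hanti : ∀ x y : M, smaleLe Φ x y → smaleLe Φ y x → x = y)
    (L : Set M) (hL : IsSmaleLowerSet Φ L) :
    IsAttractor (fun t x => Φ t x) (⋃ x ∈ L, wMinus Φ {x}) ∧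
    (⋃ x ∈ L, wMinus Φ {x}) ∩ fixedPoints Φ = L ∧
    Set.univ \ wPlus Φ (⋃ x ∈ L, wMinus Φ {x})
      = ⋃ x ∈ fixedPoints Φ \ L, wPlus Φ {x} :=
  lowerSet_attractor_general Φ hconv hfin L hL
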